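/- arXiv:0906.2098 — 2 statements merged into one kernel-verified Lean document; each statement's English description precedes it below -/
import Mathlib

section
/- Let G be a chain graph with chain components 𝒯. A strictly positive joint probability mass function p obeys the block-recursive Markov property of type IV for G if and only if p factorizes as p(i) = ∏_{T∈𝒯} p(i_T | i_{pa_D(T)}) and, for each T ∈ 𝒯 and each nonempty A ⊆ T, the conditional multivariate logistic contrasts of p_{A|pa_D(T)} satisfy: η^{(A)}(i*_A | i_{pa_D(T)}) = Σ_{b ⊆ pa_G(A)} β^{(A)}_b(i*_A, i_b) for baseline-coded functions β^{(A)}_b when A is connected, and η^{(A)}(i*_A | i_{pa_D(T)}) = 0 when A is disconnected. -/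
open scoped Classical BigOperators

/-- A mixed graph on a node set `V`: a set of directed edges and a symmetric
irreflexive set of undirected edges, the two edge sets being disjoint. -/
structure MixedGraph (V : Type*) where
  dir : V → V → Prop
  undir : V → V → Prop
  undir_symm : ∀ {a b}, undir a b → undir b a
  undir_irrefl : ∀ a, ¬ undir a a
  edge_disjoint : ∀ a b, dir a b → ¬ undir a b

namespace MixedGraph

variable {V : Type*} [Fintype V] [DecidableEq V] (G : MixedGraph V)

/-- One step of a semi-directed path: an undirected edge or a directed edge
followed in the direction of traversal. -/
def step (a b : V) : Prop := G.dir a b ∨ G.undir a b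

/-- No semi-directed cycle: there is no directed edge `a → b` together with a
semi-directed path from `b` back to `a`. -/
def NoSemiDirectedCycle : Prop :=
  ∀ a b : V, G.dir a b → ¬ Relation.ReflTransGen G.step b a

/-- Two nodes are in the same chain component iff they are joined by a path of
undirected edges (the equivalence relation generated by the undirected part). -/
def sameComp (a b : V) : Prop := Relation.ReflTransGen G.undir a b

/-- The chain component of a node. -/
noncomputable def component (v : V) : Finset V :=
  Finset.univ.filter fun w => G.sameComp v w

/-- `T` is a chain component of `G`. -/
def IsComponent (T : Finset V) : Prop := ∃ v, T = G.component v

/-- The collection of chain components of `G`. -/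
noncomputable def componentsF : Finset (Finset V) :=
  Finset.univ.image fun v => G.component v

/-- The parents `pa_G(A)`: nodes outside `A` with a directed edge into `A`. -/
noncomputable def paG (A : Finset V) : Finset V :=
  Finset.univ.filter fun w => w ∉ A ∧ ∃ v ∈ A, G.dir w v

/-- The (inclusive) neighbours `Nb_G(A)`: `A` together with all nodes joined to
`A` by an undirected edge. -/
noncomputable def nbG (A : Finset V) : Finset V :=
  A ∪ Finset.univ.filter fun w => ∃ v ∈ A, G.undir v w

/-- The edge relation of the directed graph `D` of chain components:
`T₁ → T₂` iff they are distinct chain components and `G` has a directed edge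
from a node of `T₁` to a node of `T₂`. -/
def dirD (T₁ T₂ : Finset V) : Prop :=
  G.IsComponent T₁ ∧ G.IsComponent T₂ ∧ T₁ ≠ T₂ ∧ ∃ v ∈ T₁, ∃ w ∈ T₂, G.dir v w

/-- `pa_D(T)`: the union of the parent components of `T` in `D`. -/
noncomputable def paD (T : Finset V) : Finset V :=
  Finset.univ.filter fun w => G.dirD (G.component w) T

/-- `nd_D(T)`: the union of the components `T'` such that there is no directed
path from `T` to `T'` in `D`. -/
noncomputable def ndD (T : Finset V) : Finset V :=
  Finset.univ.filter fun w => ¬ Relation.ReflTransGen G.dirD T (G.component w)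

/-- A set of nodes `A` is connected if the subgraph of the undirected part of
`G` induced by `A` is connected (in particular nonempty). -/
def ConnectedIn (A : Finset V) : Prop :=
  A.Nonempty ∧ ∀ a ∈ A, ∀ b ∈ A,
    Relation.ReflTransGen (fun x y => x ∈ A ∧ y ∈ A ∧ G.undir x y) a b

/-- The connected component of `v` inside the induced subgraph on `A`. -/
noncomputable def compIn (A : Finset V) (v : V) : Finset V :=
  A.filter fun w =>
    Relation.ReflTransGen (fun x y => x ∈ A ∧ y ∈ A ∧ G.undir x y) v w

/-- The set of connected components of the induced subgraph on `A`. -/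
noncomputable def connComps (A : Finset V) : Finset (Finset V) :=
  A.image fun v => G.compIn A v

/-- `ord` is a strict total order of the chain components consistent with `G`:
`ord T T'` implies that `T` is not a parent component of `T'`. -/
def ConsistentOrder (ord : Finset V → Finset V → Prop) : Prop :=
  (∀ T₁ T₂, G.IsComponent T₁ → G.IsComponent T₂ → T₁ ≠ T₂ →
      ord T₁ T₂ ∨ ord T₂ T₁) ∧
  (∀ T, G.IsComponent T → ¬ ord T T) ∧
  (∀ T₁ T₂ T₃, G.IsComponent T₁ → G.IsComponent T₂ → G.IsComponent T₃ →
      ord T₁ T₂ → ord T₂ T₃ → ord T₁ T₃) ∧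
  (∀ T₁ T₂, G.IsComponent T₁ → G.IsComponent T₂ → ord T₁ T₂ → ¬ G.dirD T₁ T₂)

/-- `pre(T)`: the union of all the chain components `T'` with `T ≺ T'`
(the predecessors, i.e. the past, of `T`). -/
noncomputable def pre (ord : Finset V → Finset V → Prop) (T : Finset V) :
    Finset V :=
  Finset.univ.filter fun w => ord T (G.component w)

end MixedGraph

/-- A cell of the joint contingency table: variable `v` takes one of the
levels `0, …, r v - 1` (level `0` playing the role of the first level `1`). -/
abbrev Cell {V : Type*} (r : V → ℕ) := ∀ v : V, Fin (r v)

variable {V : Type*} [Fintype V] [DecidableEq V] {r : V → ℕ}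

/-- The marginal probability `p_S(i_S)` (as a function of a full cell `i`,
depending on it only through the coordinates in `S`). -/
noncomputable def marginal (p : Cell r → ℝ) (S : Finset V) (i : Cell r) : ℝ :=
  ∑ j : Cell r, if ∀ v ∈ S, j v = i v then p j else 0

/-- The conditional probability `p_{A|B}(i_A | i_B)`. -/
noncomputable def condProb (p : Cell r → ℝ) (A B : Finset V) (i : Cell r) : ℝ :=
  marginal p (A ∪ B) i / marginal p B i

/-- `p` is a strictly positive joint probability mass function. -/
def IsPosPMF (p : Cell r → ℝ) : Prop :=
  (∀ i, 0 < p i) ∧ ∑ i : Cell r, p i = 1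

/-- Conditional independence `A ⊥ B | C`. -/
def CondIndep (p : Cell r → ℝ) (A B C : Finset V) : Prop :=
  ∀ i : Cell r,
    marginal p (A ∪ B ∪ C) i * marginal p C i =
      marginal p (A ∪ C) i * marginal p (B ∪ C) i

/-- The cell agreeing with `i` on `S` and equal to the first (reference)
level outside `S`. -/
def splice (hr : ∀ v, 2 ≤ r v) (S : Finset V) (i : Cell r) : Cell r :=
  fun v => if v ∈ S then i v else ⟨0, by have := hr v; omega⟩

/-- The conditional multivariate logistic contrast
`η^{(A)}(i_A | i_B) = Σ_{s ⊆ A} (−1)^{|A∖s|} log p_{A|B}((i_s, 1_{A∖s}) | i_B)`. -/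
noncomputable def mlContrast (hr : ∀ v, 2 ≤ r v) (p : Cell r → ℝ)
    (A B : Finset V) (i : Cell r) : ℝ :=
  ∑ s ∈ A.powerset,
    (-1 : ℝ) ^ (A \ s).card * Real.log (condProb p A B (splice hr (s ∪ B) i))

/-- The multivariate regression (MR) Markov property for the chain graph `G`
with respect to the consistent ordering `ord`: for every chain component `T`
and every nonempty `A ⊆ T`, (MR1) if `A` is connected then
`A ⊥ (pre(T)∖pa_G(A)) | pa_G(A)`, and (MR2) if `A` is disconnected then its
connected components are mutually independent given `pre(T)`. -/
def MRMarkov (G : MixedGraph V) (ord : Finset V → Finset V → Prop)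
    (p : Cell r → ℝ) : Prop :=
  ∀ T : Finset V, G.IsComponent T → ∀ A ⊆ T, A.Nonempty →
    (G.ConnectedIn A →
      CondIndep p A (G.pre ord T \ G.paG A) (G.paG A)) ∧
    (¬ G.ConnectedIn A →
      ∀ i : Cell r,
        condProb p A (G.pre ord T) i =
          ∏ Aj ∈ G.connComps A, condProb p Aj (G.pre ord T) i)

/-- The block-recursive Markov property of type IV for the chain graph `G`:
(IV0) `T ⊥ (nd_D(T)∖pa_D(T)) | pa_D(T)`;
(IV1) `A ⊥ (pa_D(T)∖pa_G(A)) | pa_G(A)` for all `A ⊆ T`;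
(IV2) `A ⊥ (T∖Nb_G(A)) | pa_D(T)` for all connected `A ⊆ T`. -/
def TypeIVMarkov (G : MixedGraph V) (p : Cell r → ℝ) : Prop :=
  (∀ T : Finset V, G.IsComponent T →
      CondIndep p T (G.ndD T \ G.paD T) (G.paD T)) ∧
  (∀ T : Finset V, G.IsComponent T → ∀ A ⊆ T,
      CondIndep p A (G.paD T \ G.paG A) (G.paG A)) ∧
  (∀ T : Finset V, G.IsComponent T → ∀ A ⊆ T, G.ConnectedIn A →
      CondIndep p A (T \ G.nbG A) (G.paD T))

/-!
The two halves of the Markov property decouple. Adding the chain components one at a time, parents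
before children, (IV0) says exactly that each new component contributes the factor
`p(i_T | i_{pa_D(T)})`; conversely a product of these factors can be summed down to any ancestral
family of components.

Within a component, a contrast is the interaction (Möbius inversion over subsets of `A`) of
`log p_{A|B}`. An interaction vanishes as soon as the function does not depend on one of its
variables, so (IV1) and (IV2) give the contrasts their stated form. For the converse, a positive
function is determined by the margins that sum out a single variable of `A` together with the
interaction of its logarithm among the variables of `A`. By induction on `A` these margins of
`p_{A|B}` are those of the function demanded by the independence, and the contrast condition gives
the interactions.
-/

section MoebiusTransform

variable {α R : Type*} [DecidableEq α] [Ring R]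

/-- The Möbius transform `S ↦ ∑_{s ⊆ S} (-1)^{|S ∖ s|} f s` of a function of finite sets. -/
def moebiusTransform (f : Finset α → R) (S : Finset α) : R :=
  ∑ s ∈ S.powerset, (-1) ^ (S \ s).card * f s

theorem moebiusTransform_insert {a : α} {S : Finset α} (ha : a ∉ S) (f : Finset α → R) :
    moebiusTransform f (insert a S) =
      moebiusTransform (fun s => f (insert a s)) S - moebiusTransform f S := by
  have hcard (s) (hs : s ∈ S.powerset) : (insert a S \ s).card = (S \ s).card + 1 := by
    rw [Finset.insert_sdiff_of_notMem _ fun h => ha (Finset.mem_powerset.1 hs h),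
      Finset.card_insert_of_notMem (by simp [ha])]
  have hsdiff (s) : insert a S \ insert a s = S \ s := by
    rw [Finset.insert_sdiff_insert, Finset.sdiff_insert_of_notMem ha]
  simp only [moebiusTransform, Finset.sum_powerset_insert ha, hsdiff]
  rw [Finset.sum_congr rfl fun s hs => by rw [hcard s hs, pow_succ, mul_neg_one, neg_mul],
    Finset.sum_neg_distrib]
  abel

theorem sum_powerset_moebiusTransform (f : Finset α → R) (S : Finset α) :
    ∑ s ∈ S.powerset, moebiusTransform f s = f S := by
  induction S using Finset.induction_on generalizing f with
  | empty => simp [moebiusTransform]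
  | insert a S ha ih =>
    have hins (s) (hs : s ∈ S.powerset) := moebiusTransform_insert
      (fun h => ha (Finset.mem_powerset.1 hs h)) f
    rw [Finset.sum_powerset_insert ha, Finset.sum_congr rfl hins, Finset.sum_sub_distrib, ih, ih]
    abel

theorem moebiusTransform_eq_zero {a : α} {S : Finset α} (ha : a ∈ S) {f : Finset α → R}
    (hf : ∀ s, f (insert a s) = f s) : moebiusTransform f S = 0 := by
  rw [← Finset.insert_erase ha, moebiusTransform_insert (Finset.notMem_erase a S)]
  simp only [hf, sub_self]

end MoebiusTransform

section Splice

variable {V : Type*} [DecidableEq V] {r : V → ℕ} (hr : ∀ v, 2 ≤ r v)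

theorem splice_of_mem {U : Finset V} {v : V} (hv : v ∈ U) (i : Cell r) :
    splice hr U i v = i v := if_pos hv

theorem splice_congr {U : Finset V} {i j : Cell r} (h : ∀ v ∈ U, i v = j v) :
    splice hr U i = splice hr U j :=
  funext fun v => if_ctx_congr Iff.rfl (h v) fun _ => rfl

theorem splice_splice (U W : Finset V) (i : Cell r) :
    splice hr U (splice hr W i) = splice hr (U ∩ W) i := by
  funext v
  by_cases hU : v ∈ U <;> by_cases hW : v ∈ W <;> simp [splice, hU, hW]

theorem splice_univ [Fintype V] (i : Cell r) : splice hr Finset.univ i = i :=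
  funext fun v => splice_of_mem hr (Finset.mem_univ v) i

theorem dependsOn_iff_forall_splice {β : Type*} {f : Cell r → β} {U : Finset V} :
    DependsOn f ↑U ↔ ∀ i, f i = f (splice hr U i) := by
  refine ⟨fun h i => h fun v hv => (splice_of_mem hr hv i).symm, fun h i j hij => ?_⟩
  rw [h i, h j, splice_congr hr hij]

end Splice

section Interaction

variable {V R : Type*} [DecidableEq V] [Ring R] {r : V → ℕ} (hr : ∀ v, 2 ≤ r v)

/-- The interaction of `f` among the variables in `S` at the cell `i`: the Möbius transform, taken
over the set of variables of `S` not reset to the reference level. The coordinates in `W` keep their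
value in `i` and those outside `S ∪ W` are at the reference level throughout. -/
def interaction (f : Cell r → R) (S W : Finset V) (i : Cell r) : R :=
  moebiusTransform (fun s => f (splice hr (s ∪ W) i)) S

theorem interaction_add (f g : Cell r → R) (S W : Finset V) (i : Cell r) :
    interaction hr (fun j => f j + g j) S W i =
      interaction hr f S W i + interaction hr g S W i := by
  simp only [interaction, moebiusTransform, mul_add, Finset.sum_add_distrib]

theorem interaction_sub (f g : Cell r → R) (S W : Finset V) (i : Cell r) :
    interaction hr (fun j => f j - g j) S W i =
      interaction hr f S W i - interaction hr g S W i := by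
  simp only [interaction, moebiusTransform, mul_sub, Finset.sum_sub_distrib]

theorem interaction_comp_splice (f : Cell r → R) (S W U : Finset V) (i : Cell r) :
    interaction hr (fun j => f (splice hr U j)) S W i = interaction hr f S W (splice hr U i) := by
  simp only [interaction, splice_splice, Finset.inter_comm U]

theorem interaction_congr_right {f : Cell r → R} {S W W' U : Finset V} (hf : DependsOn f ↑U)
    (hW : ∀ v ∈ U, v ∈ W ↔ v ∈ W') (i : Cell r) :
    interaction hr f S W i = interaction hr f S W' i := by
  have hsplice (s : Finset V) : f (splice hr (s ∪ W) i) = f (splice hr (s ∪ W') i) :=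
    hf fun v hv => by simp only [splice, Finset.mem_union, hW v hv]
  simp only [interaction, hsplice]

theorem interaction_eq_zero_of_dependsOn {f : Cell r → R} {S W U : Finset V} {v : V}
    (hf : DependsOn f ↑U) (hvS : v ∈ S) (hvU : v ∉ U) (i : Cell r) :
    interaction hr f S W i = 0 :=
  moebiusTransform_eq_zero hvS fun s => hf fun w hw => by
    have hwv : w ≠ v := ne_of_mem_of_not_mem hw hvU
    simp [splice, hwv]

theorem interaction_eq_zero_of_level_eq_zero {f : Cell r → R} {S W : Finset V} {v : V}
    (hvS : v ∈ S) {i : Cell r} (hv : (i v : ℕ) = 0) : interaction hr f S W i = 0 :=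
  moebiusTransform_eq_zero hvS fun s => by
    congr 1
    funext w
    by_cases hw : w = v
    · subst hw
      simp [splice, Fin.ext_iff, hv]
    · simp [splice, hw]

theorem dependsOn_interaction (f : Cell r → R) (S W : Finset V) :
    DependsOn (interaction hr f S W) ↑(W ∪ S) := fun i j hij => by
  have hsplice (s) (hs : s ∈ S.powerset) : splice hr (s ∪ W) i = splice hr (s ∪ W) j :=
    splice_congr hr fun v hv => hij v <| by
      rw [Finset.union_comm W]
      exact Finset.union_subset_union_left (Finset.mem_powerset.1 hs) hv
  exact Finset.sum_congr rfl fun s hs => by simp only [hsplice s hs]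

theorem sum_powerset_interaction (f : Cell r → R) (P W : Finset V) (i : Cell r) :
    ∑ b ∈ P.powerset, interaction hr f b W i = f (splice hr (P ∪ W) i) :=
  sum_powerset_moebiusTransform _ P

end Interaction

section BaselineExpansion

variable {V R : Type*} [DecidableEq V] [Ring R] {r : V → ℕ}

/-- The function `f`, at the cells whose coordinates in `A` all differ from the reference level,
is a sum `∑_{b ⊆ P} β_b(i_A, i_b)` of baseline-coded functions. -/
def HasBaselineExpansion (f : Cell r → R) (A P : Finset V) : Prop :=
  ∃ β : Finset V → Cell r → R,
    (∀ b, DependsOn (β b) ↑(A ∪ b)) ∧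
    (∀ b i, (∃ v ∈ b, (i v : ℕ) = 0) → β b i = 0) ∧
    ∀ i : Cell r, (∀ v ∈ A, (i v : ℕ) ≠ 0) → f i = ∑ b ∈ P.powerset, β b i

theorem hasBaselineExpansion_of_eq_zero {f : Cell r → R} {A : Finset V}
    (h : ∀ i : Cell r, (∀ v ∈ A, (i v : ℕ) ≠ 0) → f i = 0) (P : Finset V) :
    HasBaselineExpansion f A P :=
  ⟨fun _ _ => 0, fun _ _ _ _ => rfl, fun _ _ _ => rfl, fun i hi => by simp [h i hi]⟩

theorem HasBaselineExpansion.mono {f : Cell r → R} {A P P' : Finset V}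
    (h : HasBaselineExpansion f A P) (hP : P ⊆ P') : HasBaselineExpansion f A P' := by
  obtain ⟨β, hdep, hzero, hsum⟩ := h
  refine ⟨fun b i => if b ⊆ P then β b i else 0, fun b i j hij => ?_, fun b i hi => ?_,
    fun i hi => ?_⟩
  · simp only [hdep b hij]
  · simp only [hzero b i hi, ite_self]
  · rw [hsum i hi, ← Finset.sum_filter]
    congr 1
    ext b
    simp only [Finset.mem_filter, Finset.mem_powerset]
    exact ⟨fun hb => ⟨hb.trans hP, hb⟩, And.right⟩

theorem hasBaselineExpansion_iff (hr : ∀ v, 2 ≤ r v) {f : Cell r → R} {A P : Finset V} :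
    HasBaselineExpansion f A P ↔
      ∀ i : Cell r, (∀ v ∈ A, (i v : ℕ) ≠ 0) → f i = f (splice hr (A ∪ P) i) := by
  constructor
  · rintro ⟨β, hdep, -, hsum⟩ i hi
    have hsplice : ∀ v ∈ A, (splice hr (A ∪ P) i v : ℕ) ≠ 0 := fun v hv => by
      rw [splice_of_mem hr (Finset.mem_union_left P hv)]
      exact hi v hv
    rw [hsum i hi, hsum _ hsplice]
    refine Finset.sum_congr rfl fun b hb => hdep b fun v hv => (splice_of_mem hr ?_ i).symm
    exact Finset.union_subset_union_right (Finset.mem_powerset.1 hb) hv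
  · intro h
    refine ⟨fun b => interaction hr f b A, fun b => dependsOn_interaction hr f b A,
      fun b i ⟨v, hv, hi⟩ => interaction_eq_zero_of_level_eq_zero hr hv hi, fun i hi => ?_⟩
    rw [h i hi, sum_powerset_interaction, Finset.union_comm]

end BaselineExpansion

section Marginal

variable {V : Type*} [Fintype V] [DecidableEq V] {r : V → ℕ}

theorem dependsOn_marginal (p : Cell r → ℝ) (S : Finset V) : DependsOn (marginal p S) ↑S :=
  fun i j hij => Finset.sum_congr rfl fun k _ => by
    refine if_congr (forall₂_congr fun v hv => ?_) rfl rfl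
    rw [hij v hv]

theorem marginal_pos {p : Cell r → ℝ} (hp : ∀ i, 0 < p i) (S : Finset V) (i : Cell r) :
    0 < marginal p S i := by
  refine Finset.sum_pos' (fun j _ => ?_) ⟨i, Finset.mem_univ i, by simpa using hp i⟩
  split_ifs
  exacts [(hp j).le, le_rfl]

theorem marginal_univ (p : Cell r → ℝ) (i : Cell r) : marginal p Finset.univ i = p i := by
  simp [marginal, ← funext_iff]

theorem marginal_empty (p : Cell r → ℝ) (i : Cell r) : marginal p ∅ i = ∑ j, p j := by
  simp [marginal]

theorem marginal_sub (f g : Cell r → ℝ) (S : Finset V) (i : Cell r) :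
    marginal (fun j => f j - g j) S i = marginal f S i - marginal g S i := by
  simp only [marginal, ← Finset.sum_sub_distrib]
  exact Finset.sum_congr rfl fun j _ => by split_ifs <;> simp

theorem marginal_mul_of_dependsOn {K : Cell r → ℝ} {S : Finset V} (hK : DependsOn K ↑S)
    (f : Cell r → ℝ) (i : Cell r) :
    marginal (fun j => f j * K j) S i = marginal f S i * K i := by
  simp only [marginal, Finset.sum_mul, ite_mul, zero_mul]
  refine Finset.sum_congr rfl fun j _ => if_ctx_congr Iff.rfl (fun hj => ?_) fun _ => rfl
  rw [hK hj]

theorem marginal_marginal_compl {S D : Finset V} (hD : D ⊆ S) (p : Cell r → ℝ) (i : Cell r) :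
    marginal (marginal p S) Dᶜ i = marginal p (S \ D) i := by
  have hiff (j k : Cell r) : ((∀ v ∈ Dᶜ, j v = i v) ∧ ∀ v ∈ S, k v = j v) ↔
      j = D.piecewise k i ∧ ∀ v ∈ S \ D, k v = i v := by
    constructor
    · rintro ⟨hj, hk⟩
      refine ⟨funext fun v => ?_, fun v hv => ?_⟩
      · by_cases hv : v ∈ D
        · rw [D.piecewise_eq_of_mem _ _ hv, hk v (hD hv)]
        · rw [D.piecewise_eq_of_notMem _ _ hv, hj v (Finset.mem_compl.2 hv)]
      · obtain ⟨hvS, hvD⟩ := Finset.mem_sdiff.1 hv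
        rw [hk v hvS, hj v (Finset.mem_compl.2 hvD)]
    · rintro ⟨rfl, hk⟩
      refine ⟨fun v hv => D.piecewise_eq_of_notMem _ _ (Finset.mem_compl.1 hv), fun v hv => ?_⟩
      by_cases hvD : v ∈ D
      · rw [D.piecewise_eq_of_mem _ _ hvD]
      · rw [D.piecewise_eq_of_notMem _ _ hvD, hk v (Finset.mem_sdiff.2 ⟨hv, hvD⟩)]
  simp only [marginal, ← Finset.sum_filter]
  rw [Finset.sum_comm' (t' := {k | ∀ v ∈ S \ D, k v = i v}) (s' := fun k => {D.piecewise k i})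
    fun j k => by simpa using hiff j k]
  simp only [Finset.sum_singleton]

theorem marginal_sdiff_mul_eq {p K K' : Cell r → ℝ} {X Y D : Finset V} (hX : D ⊆ X) (hY : D ⊆ Y)
    (hK : DependsOn K ↑Dᶜ) (hK' : DependsOn K' ↑Dᶜ)
    (h : ∀ i, marginal p X i * K i = marginal p Y i * K' i) (i : Cell r) :
    marginal p (X \ D) i * K i = marginal p (Y \ D) i * K' i := by
  rw [← marginal_marginal_compl hX, ← marginal_marginal_compl hY,
    ← marginal_mul_of_dependsOn hK, ← marginal_mul_of_dependsOn hK', funext h]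

theorem marginal_comp_splice (hr : ∀ v, 2 ≤ r v) {D U : Finset V} (hD : D ⊆ U) (f : Cell r → ℝ)
    (i : Cell r) :
    marginal (fun j => f (splice hr U j)) Dᶜ i = marginal f Dᶜ (splice hr U i) := by
  have hext {j k : Cell r} (hjk : ∀ v ∈ D, j v = k v) (hjk' : ∀ v ∉ D, j v = k v) : j = k :=
    funext fun v => by_cases (hjk v) (hjk' v)
  simp only [marginal, ← Finset.sum_filter]
  refine Finset.sum_bij' (fun j _ => splice hr U j) (fun k _ => D.piecewise k i)
    ?_ ?_ ?_ ?_ fun _ _ => rfl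
  all_goals simp only [Finset.mem_filter, Finset.mem_univ, true_and, Finset.mem_compl]
  · intro j hj v hv
    simp only [splice, hj v hv]
  · exact fun k _ v hv => D.piecewise_eq_of_notMem _ _ hv
  · refine fun j hj => hext (fun v hv => ?_) fun v hv => ?_
    · rw [D.piecewise_eq_of_mem _ _ hv, splice_of_mem hr (hD hv)]
    · rw [D.piecewise_eq_of_notMem _ _ hv, hj v hv]
  · refine fun k hk => hext (fun v hv => ?_) fun v hv => ?_
    · rw [splice_of_mem hr (hD hv), D.piecewise_eq_of_mem _ _ hv]
    · simp only [hk v hv, splice, D.piecewise_eq_of_notMem _ _ hv]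

theorem sum_mul_eq_zero_of_marginal_eq_zero {f h : Cell r → ℝ} {S : Finset V}
    (hf : ∀ i, marginal f S i = 0) (hh : DependsOn h ↑S) : ∑ i, f i * h i = 0 := by
  rcases isEmpty_or_nonempty (Cell r) with _ | ⟨⟨i⟩⟩
  · exact Finset.sum_of_isEmpty _
  have hzero : marginal (fun j => f j * h j) S = 0 := funext fun j => by
    rw [marginal_mul_of_dependsOn hh, hf, zero_mul, Pi.zero_apply]
  have htower := marginal_marginal_compl (Finset.Subset.refl S) (fun j => f j * h j) i
  rw [hzero, Finset.sdiff_self, marginal_empty] at htower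
  simpa [marginal] using htower.symm

theorem sum_mul_interaction (hr : ∀ v, 2 ≤ r v) {f : Cell r → ℝ} {S : Finset V}
    (hf : ∀ v ∈ S, ∀ i, marginal f {v}ᶜ i = 0) (L : Cell r → ℝ) :
    ∑ i, f i * interaction hr L S Sᶜ i = ∑ i, f i * L i := by
  have hterm (s) (hs : s ∈ S.powerset) (hne : s ≠ S) :
      ∑ i, f i * L (splice hr (s ∪ Sᶜ) i) = 0 := by
    obtain ⟨v, hvS, hvs⟩ := Finset.exists_of_ssubset
      (Finset.ssubset_iff_subset_ne.2 ⟨Finset.mem_powerset.1 hs, hne⟩)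
    refine sum_mul_eq_zero_of_marginal_eq_zero (hf v hvS) fun i j hij => ?_
    rw [splice_congr hr fun w hw => hij w (Finset.mem_coe.2 ?_)]
    rw [Finset.mem_compl, Finset.mem_singleton]
    rintro rfl
    simp [hvs, hvS] at hw
  calc ∑ i, f i * interaction hr L S Sᶜ i
      = ∑ s ∈ S.powerset, (-1) ^ (S \ s).card * ∑ i, f i * L (splice hr (s ∪ Sᶜ) i) := by
        simp only [interaction, moebiusTransform, Finset.mul_sum, mul_left_comm]
        exact Finset.sum_comm
    _ = ∑ i, f i * L i := by
        rw [Finset.sum_eq_single_of_mem S (Finset.mem_powerset_self S)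
          fun s hs hne => by rw [hterm s hs hne, mul_zero]]
        simp [splice_univ]

-- `F - G` has zero margins on the sets `{v}ᶜ`, so pairing it with `log F - log G` amounts to
-- pairing it with the interaction of `log F - log G`, which vanishes; as `log` is strictly
-- increasing, each term of `∑ (F - G) (log F - log G)` is nonnegative, and zero only where `F` and
-- `G` agree.
theorem eq_of_marginal_eq_of_interaction_log_eq (hr : ∀ v, 2 ≤ r v) {F G : Cell r → ℝ}
    (hF : ∀ i, 0 < F i) (hG : ∀ i, 0 < G i) {S : Finset V}
    (hmarg : ∀ v ∈ S, ∀ i, marginal F {v}ᶜ i = marginal G {v}ᶜ i)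
    (hint : ∀ i : Cell r, (∀ v ∈ S, (i v : ℕ) ≠ 0) →
      interaction hr (fun j => Real.log (F j)) S Sᶜ i =
        interaction hr (fun j => Real.log (G j)) S Sᶜ i) : F = G := by
  have hint' (i : Cell r) :
      interaction hr (fun j => Real.log (F j) - Real.log (G j)) S Sᶜ i = 0 := by
    by_cases hi : ∀ v ∈ S, (i v : ℕ) ≠ 0
    · rw [interaction_sub, hint i hi, sub_self]
    · push Not at hi
      obtain ⟨v, hvS, hv⟩ := hi
      exact interaction_eq_zero_of_level_eq_zero hr hvS hv
  have hD (v) (hv : v ∈ S) (i) : marginal (fun j => F j - G j) {v}ᶜ i = 0 := by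
    rw [marginal_sub, hmarg v hv, sub_self]
  have hsum : ∑ i, (F i - G i) * (Real.log (F i) - Real.log (G i)) = 0 := by
    rw [← sum_mul_interaction hr hD]
    simp only [hint', mul_zero, Finset.sum_const_zero]
  have hnonneg (i) : 0 ≤ (F i - G i) * (Real.log (F i) - Real.log (G i)) := by
    rcases le_total (F i) (G i) with h | h
    · exact mul_nonneg_of_nonpos_of_nonpos (sub_nonpos.2 h)
        (sub_nonpos.2 (Real.log_le_log (hF i) h))
    · exact mul_nonneg (sub_nonneg.2 h) (sub_nonneg.2 (Real.log_le_log (hG i) h))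
  funext i
  have hi := (Finset.sum_eq_zero_iff_of_nonneg fun i _ => hnonneg i).1 hsum i (Finset.mem_univ i)
  rcases mul_eq_zero.1 hi with h | h
  · exact sub_eq_zero.1 h
  · exact Real.log_injOn_pos (hF i) (hG i) (sub_eq_zero.1 h)

end Marginal

section CondProb

variable {V : Type*} [Fintype V] [DecidableEq V] {r : V → ℕ} {p : Cell r → ℝ}
  {A B C P : Finset V}

theorem condProb_pos (hp : ∀ i, 0 < p i) (A B : Finset V) (i : Cell r) : 0 < condProb p A B i :=
  div_pos (marginal_pos hp _ i) (marginal_pos hp _ i)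

theorem dependsOn_condProb (p : Cell r → ℝ) (A B : Finset V) :
    DependsOn (condProb p A B) ↑(A ∪ B) := fun i j hij => by
  rw [condProb, condProb, dependsOn_marginal p (A ∪ B) hij,
    (dependsOn_marginal p B).mono (Finset.coe_subset.2 Finset.subset_union_right) hij]

theorem marginal_condProb_compl {D : Finset V} (hDA : D ⊆ A) (hDB : Disjoint D B) (p : Cell r → ℝ)
    (i : Cell r) : marginal (condProb p A B) Dᶜ i = condProb p (A \ D) B i := by
  have hinv : DependsOn (fun j => (marginal p B j)⁻¹) ↑Dᶜ := fun j k hjk =>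
    congrArg Inv.inv <| (dependsOn_marginal p B).mono
      (Finset.coe_subset.2 hDB.symm.le_compl_right) hjk
  have hsdiff : (A ∪ B) \ D = A \ D ∪ B := by
    rw [Finset.union_sdiff_distrib, Finset.sdiff_eq_self_of_disjoint hDB.symm]
  rw [show condProb p A B = fun j => marginal p (A ∪ B) j * (marginal p B j)⁻¹ from rfl,
    marginal_mul_of_dependsOn hinv, marginal_marginal_compl (hDA.trans Finset.subset_union_left),
    hsdiff, ← div_eq_mul_inv, condProb]

theorem condIndep_empty_left (p : Cell r → ℝ) (B C : Finset V) : CondIndep p ∅ B C := fun i => by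
  rw [Finset.empty_union, Finset.empty_union, mul_comm]

theorem CondIndep.symm (h : CondIndep p A C B) : CondIndep p C A B := fun i => by
  rw [Finset.union_comm C A, h i, mul_comm]

theorem CondIndep.mono_right {C' : Finset V} (h : CondIndep p A C B) (hC : C' ⊆ C)
    (hAC : Disjoint A C) (hCB : Disjoint C B) : CondIndep p A C' B := by
  have hD : C \ C' ⊆ C := Finset.sdiff_subset
  have hdep {S : Finset V} (hS : Disjoint S (C \ C')) : DependsOn (marginal p S) ↑(C \ C')ᶜ :=
    (dependsOn_marginal p S).mono <| Finset.coe_subset.2 hS.le_compl_right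
  have hAD : Disjoint A (C \ C') := hAC.mono_right hD
  have hBD : Disjoint B (C \ C') := hCB.symm.mono_right hD
  have hABD : Disjoint (A ∪ B) (C \ C') := Finset.disjoint_union_left.2 ⟨hAD, hBD⟩
  have hsdiff : (C ∪ B) \ (C \ C') = C' ∪ B := by
    rw [Finset.union_sdiff_distrib, Finset.sdiff_sdiff_eq_self hC,
      Finset.sdiff_eq_self_of_disjoint hBD]
  have hsdiff' : (A ∪ C ∪ B) \ (C \ C') = A ∪ C' ∪ B := by
    rw [Finset.union_assoc, Finset.union_sdiff_distrib, hsdiff,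
      Finset.sdiff_eq_self_of_disjoint hAD, Finset.union_assoc]
  have hmargin := marginal_sdiff_mul_eq (p := p) (X := A ∪ C ∪ B) (Y := C ∪ B) (D := C \ C')
    (fun v hv => by simp [hD hv]) (fun v hv => by simp [hD hv]) (hdep hBD) (hdep hABD)
    fun i => (h i).trans (mul_comm _ _)
  intro i
  rw [← hsdiff', hmargin i, hsdiff, mul_comm]

theorem condIndep_iff_condProb_union (hp : ∀ i, 0 < p i) :
    CondIndep p A C B ↔ ∀ i, condProb p (A ∪ C) B i = condProb p A B i * condProb p C B i := by
  refine forall_congr' fun i => ?_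
  have hB := (marginal_pos hp B i).ne'
  rw [condProb, condProb, condProb, div_mul_div_comm, div_eq_div_iff hB (mul_ne_zero hB hB),
    ← mul_assoc, mul_left_inj' hB]

theorem condIndep_sdiff_iff_condProb_eq (hp : ∀ i, 0 < p i) (hP : P ⊆ B) :
    CondIndep p A (B \ P) P ↔ ∀ i, condProb p A B i = condProb p A P i := by
  refine forall_congr' fun i => ?_
  rw [condProb, condProb, div_eq_div_iff (marginal_pos hp B i).ne' (marginal_pos hp P i).ne',
    Finset.union_assoc, Finset.sdiff_union_of_subset hP]

theorem condIndep_sdiff_iff_dependsOn (hp : ∀ i, 0 < p i) (hP : P ⊆ B) (hAB : Disjoint A B) :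
    CondIndep p A (B \ P) P ↔ DependsOn (condProb p A B) ↑(A ∪ P) := by
  rw [condIndep_sdiff_iff_condProb_eq hp hP]
  refine ⟨fun h => funext h ▸ dependsOn_condProb p A P, fun h i => ?_⟩
  have hAD : Disjoint A (B \ P) := hAB.mono_right Finset.sdiff_subset
  have hsdiff : (A ∪ B) \ (B \ P) = A ∪ P := by
    rw [Finset.union_sdiff_distrib, Finset.sdiff_eq_self_of_disjoint hAD,
      Finset.sdiff_sdiff_eq_self hP]
  have hcompl : A ∪ P ⊆ (B \ P)ᶜ :=
    (Finset.disjoint_union_left.2 ⟨hAD, Finset.disjoint_sdiff⟩).le_compl_right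
  have hmargin := marginal_sdiff_mul_eq (K := fun _ => 1)
    (Finset.sdiff_subset.trans Finset.subset_union_right) Finset.sdiff_subset
    (fun _ _ _ => rfl) (h.mono (Finset.coe_subset.2 hcompl))
    (fun i => by rw [mul_one, condProb, mul_div_cancel₀ _ (marginal_pos hp B i).ne']) i
  rw [hsdiff, Finset.sdiff_sdiff_eq_self hP, mul_one] at hmargin
  rw [condProb.eq_def p A P, hmargin, mul_div_cancel_left₀ _ (marginal_pos hp P i).ne']

end CondProb

section Contrast

variable {V : Type*} [Fintype V] [DecidableEq V] {r : V → ℕ} (hr : ∀ v, 2 ≤ r v) {p : Cell r → ℝ}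
  {A B C P : Finset V}

theorem dependsOn_log_condProb (p : Cell r → ℝ) (A B : Finset V) :
    DependsOn (fun i => Real.log (condProb p A B i)) ↑(A ∪ B) :=
  fun _ _ hij => congrArg Real.log (dependsOn_condProb p A B hij)

theorem mlContrast_eq_interaction (hAB : Disjoint A B) (i : Cell r) :
    mlContrast hr p A B i = interaction hr (fun j => Real.log (condProb p A B j)) A Aᶜ i :=
  interaction_congr_right hr (dependsOn_log_condProb p A B) (W := B) (fun v hv => by
    have hvAB : v ∈ A → v ∉ B := fun h => Finset.disjoint_left.1 hAB h
    rw [Finset.mem_compl]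
    rcases Finset.mem_union.1 hv with h | h <;> tauto) i

theorem interaction_log_condProb_mul_eq_zero (hp : ∀ i, 0 < p i) (hA : A.Nonempty)
    (hC : C.Nonempty) (hAC : Disjoint A C) (hACB : Disjoint (A ∪ C) B) (W : Finset V)
    (i : Cell r) :
    interaction hr (fun j => Real.log (condProb p A B j * condProb p C B j)) (A ∪ C) W i = 0 := by
  obtain ⟨a, ha⟩ := hA
  obtain ⟨c, hc⟩ := hC
  obtain ⟨hAB, hCB⟩ := Finset.disjoint_union_left.1 hACB
  have haC : a ∉ C ∪ B :=
    Finset.disjoint_left.1 (Finset.disjoint_union_right.2 ⟨hAC, hAB⟩) ha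
  have hcA : c ∉ A ∪ B :=
    Finset.disjoint_left.1 (Finset.disjoint_union_right.2 ⟨hAC.symm, hCB⟩) hc
  simp only [Real.log_mul (condProb_pos hp _ _ _).ne' (condProb_pos hp _ _ _).ne']
  rw [interaction_add,
    interaction_eq_zero_of_dependsOn hr (dependsOn_log_condProb p A B)
      (Finset.mem_union_right A hc) hcA,
    interaction_eq_zero_of_dependsOn hr (dependsOn_log_condProb p C B)
      (Finset.mem_union_left C ha) haC, add_zero]

theorem CondIndep.mlContrast_eq_zero (h : CondIndep p A C B) (hp : ∀ i, 0 < p i)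
    (hA : A.Nonempty) (hC : C.Nonempty) (hAC : Disjoint A C) (hACB : Disjoint (A ∪ C) B)
    (i : Cell r) : mlContrast hr p (A ∪ C) B i = 0 := by
  rw [mlContrast_eq_interaction hr hACB, funext ((condIndep_iff_condProb_union hp).1 h)]
  exact interaction_log_condProb_mul_eq_zero hr hp hA hC hAC hACB _ i

theorem CondIndep.marginal_condProb_union {D : Finset V} (h : CondIndep p (A \ D) C B)
    (hp : ∀ i, 0 < p i) (hDA : D ⊆ A) (hDC : Disjoint D C) (hDB : Disjoint D B) (i : Cell r) :
    marginal (condProb p (A ∪ C) B) Dᶜ i =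
      marginal (fun j => condProb p A B j * condProb p C B j) Dᶜ i := by
  have hdep : DependsOn (condProb p C B) ↑Dᶜ := (dependsOn_condProb p C B).mono <|
    Finset.coe_subset.2 (Finset.disjoint_union_right.2 ⟨hDC, hDB⟩).symm.le_compl_right
  rw [marginal_condProb_compl (hDA.trans Finset.subset_union_left) hDB,
    marginal_mul_of_dependsOn hdep, marginal_condProb_compl hDA hDB,
    ← (condIndep_iff_condProb_union hp).1 h, Finset.union_sdiff_distrib,
    Finset.sdiff_eq_self_of_disjoint hDC.symm]

theorem condIndep_of_forall_mlContrast_eq_zero (hp : ∀ i, 0 < p i) (hAC : Disjoint A C)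
    (hACB : Disjoint (A ∪ C) B)
    (h : ∀ A' ⊆ A, ∀ C' ⊆ C, A'.Nonempty → C'.Nonempty →
      ∀ i : Cell r, (∀ v ∈ A' ∪ C', (i v : ℕ) ≠ 0) → mlContrast hr p (A' ∪ C') B i = 0) :
    CondIndep p A C B := by
  induction hS : A ∪ C using Finset.strongInduction generalizing A C with
  | H S ih =>
    subst hS
    rcases A.eq_empty_or_nonempty with rfl | hA
    · exact condIndep_empty_left p C B
    rcases C.eq_empty_or_nonempty with rfl | hC
    · exact (condIndep_empty_left p A B).symm
    have ih' {A' C' v} (hA' : A' ⊆ A) (hC' : C' ⊆ C) (hv : v ∈ A ∪ C) (hv' : v ∉ A' ∪ C') :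
        CondIndep p A' C' B := by
      have hsub : A' ∪ C' ⊆ A ∪ C := Finset.union_subset_union hA' hC'
      exact ih _ ((Finset.ssubset_iff_of_subset hsub).2 ⟨v, hv, hv'⟩) (hAC.mono hA' hC')
        (hACB.mono_left hsub)
        (fun A'' hA'' C'' hC'' => h A'' (hA''.trans hA') C'' (hC''.trans hC')) rfl
    refine (condIndep_iff_condProb_union hp).2 <| congrFun <|
      eq_of_marginal_eq_of_interaction_log_eq hr (condProb_pos hp _ _)
        (fun i => mul_pos (condProb_pos hp A B i) (condProb_pos hp C B i))
        (S := A ∪ C) (fun v hv i => ?_) fun i hi => ?_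
    · have hvB : Disjoint {v} B := hACB.mono_left (Finset.singleton_subset_iff.2 hv)
      rcases Finset.mem_union.1 hv with hvA | hvC
      · have hvC : v ∉ C := Finset.disjoint_left.1 hAC hvA
        exact (ih' Finset.sdiff_subset subset_rfl hv (by simp [hvC])).marginal_condProb_union hp
          (Finset.singleton_subset_iff.2 hvA) (Finset.disjoint_singleton_left.2 hvC) hvB i
      · have hvA : v ∉ A := Finset.disjoint_right.1 hAC hvC
        rw [Finset.union_comm A C]
        simp only [mul_comm (condProb p A B _)]
        have hci := ih' subset_rfl (Finset.sdiff_subset (t := {v})) hv (by simp [hvA])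
        exact hci.symm.marginal_condProb_union hp
          (Finset.singleton_subset_iff.2 hvC) (Finset.disjoint_singleton_left.2 hvA) hvB i
    · rw [← mlContrast_eq_interaction hr hACB, h A subset_rfl C subset_rfl hA hC i hi,
        interaction_log_condProb_mul_eq_zero hr hp hA hC hAC hACB]

theorem CondIndep.hasBaselineExpansion_mlContrast (h : CondIndep p A (B \ P) P)
    (hp : ∀ i, 0 < p i) (hP : P ⊆ B) (hAB : Disjoint A B) :
    HasBaselineExpansion (mlContrast hr p A B) A P :=
  (hasBaselineExpansion_iff hr).2 fun i _ => by
    have hsplice := (dependsOn_iff_forall_splice hr).1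
      ((condIndep_sdiff_iff_dependsOn hp hP hAB).1 h)
    rw [mlContrast_eq_interaction hr hAB, mlContrast_eq_interaction hr hAB,
      ← interaction_comp_splice]
    simp only [← hsplice]

theorem condIndep_sdiff_of_forall_hasBaselineExpansion (hp : ∀ i, 0 < p i) (hP : P ⊆ B)
    (hAB : Disjoint A B)
    (h : ∀ S ⊆ A, S.Nonempty → HasBaselineExpansion (mlContrast hr p S B) S P) :
    CondIndep p A (B \ P) P := by
  induction A using Finset.strongInduction with
  | H A ih =>
    rcases A.eq_empty_or_nonempty with rfl | hA
    · exact condIndep_empty_left p _ _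
    rw [condIndep_sdiff_iff_dependsOn hp hP hAB, dependsOn_iff_forall_splice hr]
    refine congrFun <| eq_of_marginal_eq_of_interaction_log_eq hr (condProb_pos hp A B)
      (fun i => condProb_pos hp A B (splice hr (A ∪ P) i)) (S := A) (fun v hv i => ?_)
      fun i hi => ?_
    · have hvA : {v} ⊆ A := Finset.singleton_subset_iff.2 hv
      have hdep : DependsOn (condProb p (A \ {v}) B) ↑(A ∪ P) := by
        have hind := ih (A \ {v}) (Finset.sdiff_ssubset hvA (Finset.singleton_nonempty v))
          (hAB.mono_left Finset.sdiff_subset)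
          fun S hS => h S (hS.trans Finset.sdiff_subset)
        refine ((condIndep_sdiff_iff_dependsOn hp hP (hAB.mono_left Finset.sdiff_subset)).1
          hind).mono (Finset.coe_subset.2 ?_)
        exact Finset.union_subset_union_left Finset.sdiff_subset
      rw [marginal_comp_splice hr (hvA.trans Finset.subset_union_left),
        marginal_condProb_compl hvA (hAB.mono_left hvA),
        marginal_condProb_compl hvA (hAB.mono_left hvA)]
      exact (dependsOn_iff_forall_splice hr).1 hdep i
    · rw [interaction_comp_splice hr (fun j => Real.log (condProb p A B j)),
        ← mlContrast_eq_interaction hr hAB, ← mlContrast_eq_interaction hr hAB]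
      exact (hasBaselineExpansion_iff hr).1 (h A subset_rfl hA) i hi

end Contrast

namespace MixedGraph

section Connectivity

variable {V : Type*} {G : MixedGraph V} {A C : Finset V}

theorem mem_compIn {v w : V} : w ∈ G.compIn A v ↔
    w ∈ A ∧ Relation.ReflTransGen (fun x y => x ∈ A ∧ y ∈ A ∧ G.undir x y) v w := by
  simp [compIn]

theorem connectedIn_compIn {v : V} (hv : v ∈ A) : G.ConnectedIn (G.compIn A v) := by
  let adj (S : Finset V) (x y : V) : Prop := x ∈ S ∧ y ∈ S ∧ G.undir x y
  have hself : v ∈ G.compIn A v := mem_compIn.2 ⟨hv, .refl⟩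
  have hpath {w} (hw : Relation.ReflTransGen (adj A) v w) :
      Relation.ReflTransGen (adj (G.compIn A v)) v w := by
    induction hw with
    | refl => exact .refl
    | tail hx hxy ih =>
      exact ih.tail ⟨mem_compIn.2 ⟨hxy.1, hx⟩, mem_compIn.2 ⟨hxy.2.1, hx.tail hxy⟩, hxy.2.2⟩
  have : Std.Symm (adj (G.compIn A v)) := ⟨fun _ _ h => ⟨h.2.1, h.1, G.undir_symm h.2.2⟩⟩
  exact ⟨⟨v, hself⟩, fun a ha b hb =>
    (Std.Symm.symm _ _ (hpath (mem_compIn.1 ha).2)).trans (hpath (mem_compIn.1 hb).2)⟩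

variable [Fintype V] [DecidableEq V]

theorem mem_nbG {v : V} : v ∈ G.nbG A ↔ v ∈ A ∨ ∃ w ∈ A, G.undir w v := by
  simp [nbG]

theorem subset_nbG (G : MixedGraph V) (A : Finset V) : A ⊆ G.nbG A := fun _ hv =>
  mem_nbG.2 (Or.inl hv)

theorem nbG_mono (G : MixedGraph V) (h : A ⊆ C) : G.nbG A ⊆ G.nbG C := fun _ hv =>
  mem_nbG.2 ((mem_nbG.1 hv).imp (@h _) fun ⟨w, hw, hwv⟩ => ⟨w, h hw, hwv⟩)

theorem not_connectedIn_union (hA : A.Nonempty) (hC : C.Nonempty) (hAC : Disjoint C (G.nbG A)) :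
    ¬ G.ConnectedIn (A ∪ C) := by
  rintro ⟨-, hconn⟩
  obtain ⟨a, ha⟩ := hA
  obtain ⟨c, hc⟩ := hC
  have hclosed {w} (hw : Relation.ReflTransGen
      (fun x y => x ∈ A ∪ C ∧ y ∈ A ∪ C ∧ G.undir x y) a w) : w ∈ A := by
    induction hw with
    | refl => exact ha
    | @tail x y _ hxy hx =>
      exact (Finset.mem_union.1 hxy.2.1).resolve_right fun hy =>
        Finset.disjoint_left.1 hAC hy (mem_nbG.2 (Or.inr ⟨x, hx, hxy.2.2⟩))
  have hcA := hclosed (hconn a (Finset.mem_union_left C ha) c (Finset.mem_union_right A hc))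
  exact Finset.disjoint_left.1 hAC hc (subset_nbG G A hcA)

theorem disjoint_sdiff_compIn_nbG (A : Finset V) (v : V) :
    Disjoint (A \ G.compIn A v) (G.nbG (G.compIn A v)) := by
  refine Finset.disjoint_left.2 fun w hw hnb => ?_
  obtain ⟨hwA, hwC⟩ := Finset.mem_sdiff.1 hw
  obtain ⟨x, hx, hxw⟩ := (mem_nbG.1 hnb).resolve_left hwC
  obtain ⟨hxA, hvx⟩ := mem_compIn.1 hx
  exact hwC (mem_compIn.2 ⟨hwA, hvx.tail ⟨hxA, hwA, hxw⟩⟩)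

theorem exists_connectedIn_of_not_connectedIn (hA : A.Nonempty) (h : ¬ G.ConnectedIn A) :
    ∃ C ⊆ A, G.ConnectedIn C ∧ (A \ C).Nonempty ∧ Disjoint (A \ C) (G.nbG C) := by
  simp only [ConnectedIn, hA, true_and] at h
  push Not at h
  obtain ⟨a, ha, b, hb, hab⟩ := h
  exact ⟨G.compIn A a, Finset.filter_subset _ _, connectedIn_compIn ha,
    ⟨b, Finset.mem_sdiff.2 ⟨hb, fun hmem => hab (mem_compIn.1 hmem).2⟩⟩,
    disjoint_sdiff_compIn_nbG A a⟩

end Connectivity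

section Components

variable {V : Type*} [Fintype V] {G : MixedGraph V} {T T₁ T₂ : Finset V} {v w : V}

theorem mem_component : w ∈ G.component v ↔ G.sameComp v w := by
  simp [component]

theorem self_mem_component (G : MixedGraph V) (v : V) : v ∈ G.component v :=
  mem_component.2 .refl

theorem isComponent_component (G : MixedGraph V) (v : V) : G.IsComponent (G.component v) :=
  ⟨v, rfl⟩

theorem component_eq_of_sameComp (h : G.sameComp v w) : G.component v = G.component w := by
  have : Std.Symm G.undir := ⟨fun _ _ => G.undir_symm⟩
  have hsymm : G.sameComp w v := Std.Symm.symm (r := Relation.ReflTransGen G.undir) _ _ h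
  ext x
  simp only [mem_component]
  exact ⟨hsymm.trans, h.trans⟩

theorem IsComponent.mem_iff (hT : G.IsComponent T) : v ∈ T ↔ G.component v = T := by
  obtain ⟨w, rfl⟩ := hT
  exact ⟨fun h => (component_eq_of_sameComp (mem_component.1 h)).symm,
    fun h => h ▸ self_mem_component G v⟩

theorem IsComponent.reflTransGen_step (hT : G.IsComponent T) (hv : v ∈ T) (hw : w ∈ T) :
    Relation.ReflTransGen G.step v w := by
  rw [← hT.mem_iff.1 hv, mem_component] at hw
  exact Relation.ReflTransGen.mono (fun _ _ => Or.inr) _ _ hw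

theorem IsComponent.reflTransGen_step_of_reflTransGen_dirD (hT₁ : G.IsComponent T₁)
    (h : Relation.ReflTransGen G.dirD T₁ T₂) (hv : v ∈ T₁) (hw : w ∈ T₂) :
    Relation.ReflTransGen G.step v w := by
  induction h generalizing w with
  | refl => exact hT₁.reflTransGen_step hv hw
  | tail _ hdir ih =>
    obtain ⟨-, hT, -, x, hx, y, hy, hxy⟩ := hdir
    exact ((ih hx).tail (Or.inl hxy)).trans (hT.reflTransGen_step hy hw)

theorem NoSemiDirectedCycle.not_reflTransGen_dirD (hG : G.NoSemiDirectedCycle)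
    (h : G.dirD T₁ T₂) : ¬ Relation.ReflTransGen G.dirD T₂ T₁ := by
  obtain ⟨-, hT₂, -, v, hv, w, hw, hvw⟩ := h
  exact fun hpath => hG v w hvw (hT₂.reflTransGen_step_of_reflTransGen_dirD hpath hw hv)

theorem NoSemiDirectedCycle.wellFounded_dirD (hG : G.NoSemiDirectedCycle) :
    WellFounded G.dirD := by
  have : Std.Irrefl (Relation.TransGen G.dirD) := ⟨fun T hT => by
    obtain ⟨T', hdir, hpath⟩ := Relation.TransGen.head'_iff.1 hT
    exact hG.not_reflTransGen_dirD hdir hpath⟩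
  exact Subrelation.wf Relation.TransGen.single
    (Finite.wellFounded_of_trans_of_irrefl (Relation.TransGen G.dirD))

theorem mem_paD : v ∈ G.paD T ↔ G.dirD (G.component v) T := by
  simp [paD]

theorem mem_ndD : v ∈ G.ndD T ↔ ¬ Relation.ReflTransGen G.dirD T (G.component v) := by
  simp [ndD]

theorem IsComponent.disjoint_paD (hT : G.IsComponent T) : Disjoint T (G.paD T) :=
  Finset.disjoint_left.2 fun _ hv hpa => (mem_paD.1 hpa).2.2.1 (hT.mem_iff.1 hv)

theorem IsComponent.disjoint_ndD (hT : G.IsComponent T) : Disjoint T (G.ndD T) :=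
  Finset.disjoint_left.2 fun _ hv hnd => mem_ndD.1 hnd (hT.mem_iff.1 hv ▸ .refl)

variable [DecidableEq V] {A A' : Finset V}

theorem mem_componentsF : T ∈ G.componentsF ↔ G.IsComponent T := by
  simp [componentsF, IsComponent, eq_comm]

theorem mem_paG : v ∈ G.paG A ↔ v ∉ A ∧ ∃ w ∈ A, G.dir v w := by
  simp [paG]

theorem NoSemiDirectedCycle.paG_subset_paD (hG : G.NoSemiDirectedCycle) (hT : G.IsComponent T)
    (hA : A ⊆ T) : G.paG A ⊆ G.paD T := fun v hv => by
  obtain ⟨-, w, hw, hvw⟩ := mem_paG.1 hv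
  refine mem_paD.2 ⟨isComponent_component G v, hT, fun heq => ?_, v, self_mem_component G v, w,
    hA hw, hvw⟩
  exact hG v w hvw (hT.reflTransGen_step (hA hw) (hT.mem_iff.2 heq))

theorem NoSemiDirectedCycle.paG_mono (hG : G.NoSemiDirectedCycle) (hT : G.IsComponent T)
    (hA : A ⊆ A') (hA' : A' ⊆ T) : G.paG A ⊆ G.paG A' := fun v hv => by
  have hvT : v ∉ T :=
    Finset.disjoint_right.1 hT.disjoint_paD (hG.paG_subset_paD hT (hA.trans hA') hv)
  obtain ⟨-, w, hw, hvw⟩ := mem_paG.1 hv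
  exact mem_paG.2 ⟨fun h => hvT (hA' h), w, hA hw, hvw⟩

end Components

section Ancestral

variable {V : Type*} [Fintype V] {G : MixedGraph V} {S : Finset (Finset V)} {T : Finset V}

/-- A family of chain components is ancestral if it contains every parent component, in the graph
`D`, of each of its members. -/
def Ancestral (G : MixedGraph V) (S : Finset (Finset V)) : Prop :=
  (∀ T ∈ S, G.IsComponent T) ∧ ∀ T ∈ S, ∀ T', G.dirD T' T → T' ∈ S

theorem Ancestral.mem_of_reflTransGen {T' : Finset V} (hS : G.Ancestral S)
    (h : Relation.ReflTransGen G.dirD T' T) (hT : T ∈ S) : T' ∈ S := by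
  induction h using Relation.ReflTransGen.head_induction_on with
  | refl => exact hT
  | head hdir _ ih => exact hS.2 _ ih _ hdir

variable [DecidableEq V]

theorem ancestral_componentsF (G : MixedGraph V) : G.Ancestral G.componentsF :=
  ⟨fun _ => mem_componentsF.1, fun _ _ _ hdir => mem_componentsF.2 hdir.1⟩

theorem Ancestral.insert (hS : G.Ancestral S) (hT : G.IsComponent T)
    (hpa : ∀ T', G.dirD T' T → T' ∈ S) : G.Ancestral (insert T S) := by
  simp only [Ancestral, Finset.forall_mem_insert]
  exact ⟨⟨hT, hS.1⟩, fun T' h => Finset.mem_insert_of_mem (hpa T' h),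
    fun T' hT' T'' h => Finset.mem_insert_of_mem (hS.2 T' hT' T'' h)⟩

theorem Ancestral.mem_biUnion_iff (hS : G.Ancestral S) {v : V} :
    v ∈ S.biUnion id ↔ G.component v ∈ S := by
  simp only [Finset.mem_biUnion, id]
  constructor
  · rintro ⟨T, hT, hv⟩
    rwa [(hS.1 T hT).mem_iff.1 hv]
  · exact fun h => ⟨_, h, self_mem_component G v⟩

theorem biUnion_componentsF (G : MixedGraph V) : G.componentsF.biUnion id = Finset.univ :=
  Finset.eq_univ_iff_forall.2 fun v =>
    (ancestral_componentsF G).mem_biUnion_iff.2 (mem_componentsF.2 (isComponent_component G v))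

theorem Ancestral.disjoint_biUnion (hS : G.Ancestral S) (hT : G.IsComponent T) (hTS : T ∉ S) :
    Disjoint T (S.biUnion id) :=
  Finset.disjoint_left.2 fun _ hv h => hTS (hT.mem_iff.1 hv ▸ hS.mem_biUnion_iff.1 h)

theorem Ancestral.paD_subset_biUnion (hS : G.Ancestral S) (hpa : ∀ T', G.dirD T' T → T' ∈ S) :
    G.paD T ⊆ S.biUnion id := fun _ hv => hS.mem_biUnion_iff.2 (hpa _ (mem_paD.1 hv))

theorem Ancestral.biUnion_subset_ndD (hS : G.Ancestral S) (hTS : T ∉ S) :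
    S.biUnion id ⊆ G.ndD T := fun _ hv =>
  mem_ndD.2 fun hpath => hTS (hS.mem_of_reflTransGen hpath (hS.mem_biUnion_iff.1 hv))

theorem NoSemiDirectedCycle.exists_parents_mem (hG : G.NoSemiDirectedCycle) (hS : G.Ancestral S)
    (hne : S ≠ G.componentsF) :
    ∃ T, G.IsComponent T ∧ T ∉ S ∧ ∀ T', G.dirD T' T → T' ∈ S := by
  have hnonempty : {T | G.IsComponent T ∧ T ∉ S}.Nonempty := by
    by_contra! hempty
    refine hne (Finset.Subset.antisymm (fun T hT => mem_componentsF.2 (hS.1 T hT)) fun T hT => ?_)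
    by_contra hTS
    exact (Set.eq_empty_iff_forall_notMem.1 hempty T) ⟨mem_componentsF.1 hT, hTS⟩
  obtain ⟨T, ⟨hT, hTS⟩, hmin⟩ := hG.wellFounded_dirD.has_min _ hnonempty
  exact ⟨T, hT, hTS, fun T' hdir => by_contra fun hT' => hmin T' ⟨hdir.1, hT'⟩ hdir⟩

theorem NoSemiDirectedCycle.ancestral_induction (hG : G.NoSemiDirectedCycle)
    {motive : Finset (Finset V) → Prop}
    (insert : ∀ S T, G.Ancestral S → G.IsComponent T → T ∉ S → (∀ T', G.dirD T' T → T' ∈ S) →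
      motive S → motive (insert T S))
    (hS : G.Ancestral S) (base : motive S) : motive G.componentsF := by
  induction hn : (G.componentsF \ S).card using Nat.strong_induction_on generalizing S with
  | _ n ih =>
    by_cases hcomp : S = G.componentsF
    · exact hcomp ▸ base
    obtain ⟨T, hT, hTS, hpa⟩ := hG.exists_parents_mem hS hcomp
    refine ih _ ?_ (hS.insert hT hpa) (insert S T hS hT hTS hpa base) rfl
    rw [← hn, Finset.sdiff_insert]
    exact Finset.card_erase_lt_of_mem (Finset.mem_sdiff.2 ⟨mem_componentsF.2 hT, hTS⟩)

theorem ancestral_filter_not_reflTransGen (G : MixedGraph V) (T : Finset V) :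
    G.Ancestral (G.componentsF.filter fun T' => ¬ Relation.ReflTransGen G.dirD T T') := by
  simp only [Ancestral, Finset.mem_filter, mem_componentsF]
  exact ⟨fun T' h => h.1, fun T' h T'' hdir => ⟨hdir.1, fun hpath => h.2 (hpath.tail hdir)⟩⟩

end Ancestral

section Factorization

variable {V : Type*} [Fintype V] [DecidableEq V] {r : V → ℕ} {G : MixedGraph V} {p : Cell r → ℝ}
  {S : Finset (Finset V)} {T : Finset V}

/-- The margin of `p` on the union of the components in `S` is the product, over these components
`T`, of the conditional probabilities of `T` given `pa_D(T)`. -/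
def FactorizesOver (G : MixedGraph V) (p : Cell r → ℝ) (S : Finset (Finset V)) : Prop :=
  ∀ i, marginal p (S.biUnion id) i = ∏ T ∈ S, condProb p T (G.paD T) i

theorem factorizesOver_empty (G : MixedGraph V) (hp : ∑ i, p i = 1) : G.FactorizesOver p ∅ :=
  fun i => by rw [Finset.biUnion_empty, marginal_empty, hp, Finset.prod_empty]

theorem factorizesOver_componentsF :
    G.FactorizesOver p G.componentsF ↔
      ∀ i, p i = ∏ T ∈ G.componentsF, condProb p T (G.paD T) i := by
  simp only [FactorizesOver, biUnion_componentsF, marginal_univ]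

theorem FactorizesOver.of_insert (h : G.FactorizesOver p (insert T S)) (hp : ∀ i, 0 < p i)
    (hS : G.Ancestral S) (hT : G.IsComponent T) (hTS : T ∉ S) :
    G.FactorizesOver p S := fun i => by
  have hpos := (marginal_pos hp (G.paD T) i).ne'
  have hTU := hS.disjoint_biUnion hT hTS
  have hdep : DependsOn (fun j => ∏ T' ∈ S, condProb p T' (G.paD T') j) ↑Tᶜ := fun j k hjk =>
    Finset.prod_congr rfl fun T' hT' => dependsOn_condProb p T' _ fun v hv => hjk v <| by
      have hsub : T' ∪ G.paD T' ⊆ S.biUnion id := Finset.union_subset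
        (Finset.subset_biUnion_of_mem id hT') (hS.paD_subset_biUnion (hS.2 T' hT'))
      exact (hTU.symm.mono_left hsub).le_compl_right hv
  have hsdiff (W) (hW : Disjoint T W) : (T ∪ W) \ T = W := Finset.union_sdiff_cancel_left hW
  have hmul (j) : marginal p (T ∪ S.biUnion id) j * marginal p (G.paD T) j =
      marginal p (T ∪ G.paD T) j * ∏ T' ∈ S, condProb p T' (G.paD T') j := by
    have hj := h j
    rw [Finset.biUnion_insert, id, Finset.prod_insert hTS] at hj
    rw [hj, mul_right_comm, condProb, div_mul_cancel₀ _ (marginal_pos hp _ j).ne']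
  have hsum := marginal_sdiff_mul_eq Finset.subset_union_left Finset.subset_union_left
    ((dependsOn_marginal p _).mono (Finset.coe_subset.2 hT.disjoint_paD.symm.le_compl_right))
    hdep hmul i
  rw [hsdiff _ hTU, hsdiff _ hT.disjoint_paD, mul_comm] at hsum
  exact mul_left_cancel₀ hpos hsum

theorem FactorizesOver.insert_iff (h : G.FactorizesOver p S) (hp : ∀ i, 0 < p i)
    (hS : G.Ancestral S) (hTS : T ∉ S) (hpa : ∀ T', G.dirD T' T → T' ∈ S) :
    G.FactorizesOver p (insert T S) ↔ CondIndep p T (S.biUnion id \ G.paD T) (G.paD T) := by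
  rw [condIndep_sdiff_iff_condProb_eq hp (hS.paD_subset_biUnion hpa)]
  refine forall_congr' fun i => ?_
  have hU := (marginal_pos hp (S.biUnion id) i).ne'
  rw [Finset.biUnion_insert, id, Finset.prod_insert hTS, ← h i, ← div_eq_iff hU, ← condProb]

theorem FactorizesOver.insert (h : G.FactorizesOver p S) (hp : ∀ i, 0 < p i)
    (hS : G.Ancestral S) (hT : G.IsComponent T) (hTS : T ∉ S) (hpa : ∀ T', G.dirD T' T → T' ∈ S)
    (hci : CondIndep p T (G.ndD T \ G.paD T) (G.paD T)) : G.FactorizesOver p (insert T S) :=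
  (h.insert_iff hp hS hTS hpa).2 <|
    hci.mono_right (Finset.sdiff_subset_sdiff (hS.biUnion_subset_ndD hTS) subset_rfl)
      (hT.disjoint_ndD.mono_right Finset.sdiff_subset) Finset.sdiff_disjoint

theorem NoSemiDirectedCycle.forall_condIndep_ndD_iff (hG : G.NoSemiDirectedCycle)
    (hp : IsPosPMF p) :
    (∀ T, G.IsComponent T → CondIndep p T (G.ndD T \ G.paD T) (G.paD T)) ↔
      ∀ i, p i = ∏ T ∈ G.componentsF, condProb p T (G.paD T) i := by
  rw [← factorizesOver_componentsF]
  refine ⟨fun hci => ?_, fun h T hT => ?_⟩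
  · have hempty : G.Ancestral ∅ := by simp [Ancestral]
    exact hG.ancestral_induction (motive := G.FactorizesOver p)
      (fun S T hS hT hTS hpa h => h.insert hp.1 hS hT hTS hpa (hci T hT))
      hempty (factorizesOver_empty G hp.2)
  · have hdown {S} (hS : G.Ancestral S) : G.FactorizesOver p S :=
      hG.ancestral_induction (motive := fun S' => G.FactorizesOver p S' → G.FactorizesOver p S)
        (fun S' T hS' hT hTS _ ih h' => ih (h'.of_insert hp.1 hS' hT hTS)) hS id h
    let N := G.componentsF.filter fun T' => ¬ Relation.ReflTransGen G.dirD T T'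
    have hN : G.Ancestral N := ancestral_filter_not_reflTransGen G T
    have hTN : T ∉ N := fun h => (Finset.mem_filter.1 h).2 .refl
    have hpa (T') (hdir : G.dirD T' T) : T' ∈ N :=
      Finset.mem_filter.2 ⟨mem_componentsF.2 hdir.1, hG.not_reflTransGen_dirD hdir⟩
    have hbi : N.biUnion id = G.ndD T := by
      ext v
      rw [hN.mem_biUnion_iff, mem_ndD, Finset.mem_filter, mem_componentsF]
      exact and_iff_right (isComponent_component G v)
    rw [← hbi]
    exact ((hdown hN).insert_iff hp.1 hN hTN hpa).1 (hdown (hN.insert hT hpa))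

end Factorization

section ContrastConditions

variable {V : Type*} [Fintype V] [DecidableEq V] {r : V → ℕ} (hr : ∀ v, 2 ≤ r v)
  {G : MixedGraph V} {p : Cell r → ℝ} {T : Finset V}

theorem forall_connectedIn_condIndep_iff (hp : ∀ i, 0 < p i) {B : Finset V} (hTB : Disjoint T B) :
    (∀ A ⊆ T, G.ConnectedIn A → CondIndep p A (T \ G.nbG A) B) ↔
      ∀ A ⊆ T, A.Nonempty → ¬ G.ConnectedIn A →
        ∀ i : Cell r, (∀ v ∈ A, (i v : ℕ) ≠ 0) → mlContrast hr p A B i = 0 := by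
  refine ⟨fun h A hA hne hdis i _ => ?_, fun h A hA _ => ?_⟩
  · obtain ⟨C, hCA, hconn, hrest, hnb⟩ := exists_connectedIn_of_not_connectedIn hne hdis
    have hCT := h C (hCA.trans hA) hconn
    have hCnb : Disjoint C (T \ G.nbG C) :=
      Finset.disjoint_sdiff.mono_left (subset_nbG G C)
    have hci := hCT.mono_right
      (Finset.subset_sdiff.2 ⟨Finset.sdiff_subset.trans hA, hnb⟩) hCnb
      (hTB.mono_left Finset.sdiff_subset)
    have hunion : C ∪ A \ C = A := Finset.union_sdiff_of_subset hCA
    have hdisjoint : Disjoint (C ∪ A \ C) B := hTB.mono_left (hunion.trans_subset hA)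
    exact hunion ▸ hci.mlContrast_eq_zero hr hp hconn.1 hrest Finset.disjoint_sdiff hdisjoint i
  · have hAnb : Disjoint A (T \ G.nbG A) := Finset.disjoint_sdiff.mono_left (subset_nbG G A)
    refine condIndep_of_forall_mlContrast_eq_zero hr hp hAnb
      (hTB.mono_left (Finset.union_subset hA Finset.sdiff_subset)) ?_
    intro A' hA' C' hC' hA'ne hC'ne
    refine h _ (Finset.union_subset (hA'.trans hA) (hC'.trans Finset.sdiff_subset))
      (hA'ne.mono Finset.subset_union_left) (not_connectedIn_union hA'ne hC'ne ?_)
    exact Finset.sdiff_disjoint.mono hC' (nbG_mono G hA')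

theorem NoSemiDirectedCycle.forall_condIndep_paG_iff (hG : G.NoSemiDirectedCycle)
    (hp : ∀ i, 0 < p i) (hT : G.IsComponent T) :
    (∀ A ⊆ T, CondIndep p A (G.paD T \ G.paG A) (G.paG A)) ↔
      ∀ A ⊆ T, A.Nonempty → HasBaselineExpansion (mlContrast hr p A (G.paD T)) A (G.paG A) := by
  refine ⟨fun h A hA _ => ?_, fun h A hA => ?_⟩
  · exact (h A hA).hasBaselineExpansion_mlContrast hr hp (hG.paG_subset_paD hT hA)
      (hT.disjoint_paD.mono_left hA)
  · exact condIndep_sdiff_of_forall_hasBaselineExpansion hr hp (hG.paG_subset_paD hT hA)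
      (hT.disjoint_paD.mono_left hA) fun S hSA hne =>
        (h S (hSA.trans hA) hne).mono (hG.paG_mono hT hSA hA)

theorem NoSemiDirectedCycle.forall_condIndep_component_iff (hG : G.NoSemiDirectedCycle)
    (hp : ∀ i, 0 < p i) (hT : G.IsComponent T) :
    ((∀ A ⊆ T, CondIndep p A (G.paD T \ G.paG A) (G.paG A)) ∧
        ∀ A ⊆ T, G.ConnectedIn A → CondIndep p A (T \ G.nbG A) (G.paD T)) ↔
      ∀ A ⊆ T, A.Nonempty →
        (G.ConnectedIn A →
          HasBaselineExpansion (mlContrast hr p A (G.paD T)) A (G.paG A)) ∧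
        (¬ G.ConnectedIn A → ∀ i : Cell r, (∀ v ∈ A, (i v : ℕ) ≠ 0) →
          mlContrast hr p A (G.paD T) i = 0) := by
  rw [hG.forall_condIndep_paG_iff hr hp hT, forall_connectedIn_condIndep_iff hr hp hT.disjoint_paD]
  refine ⟨fun h A hA hne => ⟨fun _ => h.1 A hA hne, h.2 A hA hne⟩,
    fun h => ⟨fun A hA hne => ?_, fun A hA hne => (h A hA hne).2⟩⟩
  by_cases hconn : G.ConnectedIn A
  · exact (h A hA hne).1 hconn
  · exact hasBaselineExpansion_of_eq_zero ((h A hA hne).2 hconn) _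

end ContrastConditions

end MixedGraph

/-- Corollary 1: a strictly positive joint pmf obeys the
block-recursive Markov property of type IV for `G` iff it factorizes over the
chain components as `p(i) = ∏_T p(i_T | i_{pa_D(T)})` and, for each component
`T` and nonempty `A ⊆ T`, the multivariate logistic contrasts of
`p_{A|pa_D(T)}` satisfy `η^{(A)} = Σ_{b ⊆ pa_G(A)} β^{(A)}_b` for
baseline-coded functions `β^{(A)}_b` when `A` is connected, and `η^{(A)} = 0`
when `A` is disconnected. -/
theorem typeIV_iff_factorization_and_mlContrast
    {V : Type*} [Fintype V] [DecidableEq V] {r : V → ℕ} (hr : ∀ v, 2 ≤ r v)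
    (G : MixedGraph V) (hG : G.NoSemiDirectedCycle)
    (p : Cell r → ℝ) (hp : IsPosPMF p) :
    TypeIVMarkov G p ↔
      ((∀ i : Cell r,
          p i = ∏ T ∈ G.componentsF, condProb p T (G.paD T) i) ∧
        ∀ T : Finset V, G.IsComponent T → ∀ A ⊆ T, A.Nonempty →
          (G.ConnectedIn A →
            ∃ beta : Finset V → Cell r → ℝ,
              (∀ b, ∀ i j : Cell r, (∀ v ∈ A ∪ b, i v = j v) →
                beta b i = beta b j) ∧
              (∀ b, ∀ i : Cell r, (∃ v ∈ b, (i v : ℕ) = 0) → beta b i = 0) ∧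
              (∀ i : Cell r, (∀ v ∈ A, (i v : ℕ) ≠ 0) →
                mlContrast hr p A (G.paD T) i =
                  ∑ b ∈ (G.paG A).powerset, beta b i)) ∧
          (¬ G.ConnectedIn A →
            ∀ i : Cell r, (∀ v ∈ A, (i v : ℕ) ≠ 0) →
              mlContrast hr p A (G.paD T) i = 0)) := by
  rw [TypeIVMarkov, ← forall₂_and]
  exact and_congr (hG.forall_condIndep_ndD_iff hp)
    (forall₂_congr fun _ hT => hG.forall_condIndep_component_iff hr hp.1 hT)
end

section
/- Let G be a chain graph with chain components 𝒯 and ≺ a consistent strict total order of 𝒯, and let the strictly positive joint probability mass function p obey the multivariate regression Markov property for G. If i, k, ℓ are three distinct nodes of the same chain component T such that there is no edge between i and k and no edge between i and ℓ, then {i} ⊥ {k, ℓ} | pre(T). In particular, the pairwise independencies {i} ⊥ {k} | pre(T) and {i} ⊥ {ℓ} | pre(T) occur only in combination with the joint independence {i} ⊥ {k, ℓ} | pre(T) (the composition property holds). -/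
open scoped Classical BigOperators

variable {V : Type*} [Fintype V] [DecidableEq V] {r : V → ℕ}

/-!
If no undirected edge joins `A` and `B`, the connected components of `A ∪ B` are those of `A`
together with those of `B`. Hence the product of (MR2) over the components of `A ∪ B` splits into
the products over the components of `A` and of `B`, which by (MR2) again (or trivially,
for a connected set) are the conditional probabilities of `A` and of `B` given `pre(T)`.
-/

namespace MixedGraph

variable {V : Type*} {G : MixedGraph V} {A B : Finset V} {v : V}

lemma compIn_subset : G.compIn A v ⊆ A :=
  Finset.filter_subset _ _

lemma mem_compIn_self (hv : v ∈ A) : v ∈ G.compIn A v :=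
  Finset.mem_filter.2 ⟨hv, Relation.ReflTransGen.refl⟩

lemma compIn_mono (hAB : A ⊆ B) : G.compIn A v ⊆ G.compIn B v := by
  have edge_mono : (fun x y => x ∈ A ∧ y ∈ A ∧ G.undir x y) ≤
      fun x y => x ∈ B ∧ y ∈ B ∧ G.undir x y :=
    fun _ _ ⟨hx, hy, hxy⟩ => ⟨hAB hx, hAB hy, hxy⟩
  simp only [compIn, Finset.subset_iff, Finset.mem_filter]
  exact fun w ⟨hw, path⟩ => ⟨hAB hw, Relation.ReflTransGen.mono edge_mono v w path⟩

variable [DecidableEq V]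

lemma connComps_empty : G.connComps ∅ = ∅ :=
  Finset.image_empty _

lemma ConnectedIn.connComps_eq_singleton (hA : G.ConnectedIn A) : G.connComps A = {A} := by
  have compIn_eq : ∀ v ∈ A, G.compIn A v = A := fun v hv =>
    Finset.filter_true_of_mem fun w hw => hA.2 v hv w hw
  rw [connComps, Finset.image_congr compIn_eq, Finset.image_const hA.1]

lemma disjoint_connComps (hAB : Disjoint A B) : Disjoint (G.connComps A) (G.connComps B) := by
  simp only [connComps, Finset.disjoint_left, Finset.mem_image]
  rintro _ ⟨v, hvA, rfl⟩ ⟨w, -, hwv⟩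
  have hvB : v ∈ B := compIn_subset (hwv ▸ mem_compIn_self hvA)
  exact Finset.disjoint_left.1 hAB hvA hvB

lemma compIn_union_left (hAB : ∀ a ∈ A, ∀ b ∈ B, ¬ G.undir a b) (hv : v ∈ A) :
    G.compIn (A ∪ B) v = G.compIn A v := by
  refine Finset.Subset.antisymm (fun w hw => ?_) (compIn_mono Finset.subset_union_left)
  replace hw := (Finset.mem_filter.1 hw).2
  induction hw with
  | refl => exact mem_compIn_self hv
  | tail _ edge ih =>
    obtain ⟨-, hy, hxy⟩ := edge
    obtain ⟨hx, path⟩ := Finset.mem_filter.1 ih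
    have hyA := (Finset.mem_union.1 hy).resolve_right fun hyB => hAB _ hx _ hyB hxy
    exact Finset.mem_filter.2 ⟨hyA, path.tail ⟨hx, hyA, hxy⟩⟩

lemma connComps_union (hAB : ∀ a ∈ A, ∀ b ∈ B, ¬ G.undir a b) :
    G.connComps (A ∪ B) = G.connComps A ∪ G.connComps B := by
  have hBA : ∀ b ∈ B, ∀ a ∈ A, ¬ G.undir b a := fun b hb a ha h => hAB a ha b hb (G.undir_symm h)
  simp only [connComps, Finset.image_union]
  congr 1
  · exact Finset.image_congr fun v hv => compIn_union_left hAB hv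
  · rw [Finset.union_comm A B]
    exact Finset.image_congr fun v hv => compIn_union_left hBA hv

end MixedGraph

section Probability

variable {p : Cell r → ℝ}

lemma marginal_nonneg (hp : ∀ i, 0 ≤ p i) (S : Finset V) (i : Cell r) : 0 ≤ marginal p S i :=
  Finset.sum_nonneg fun j _ => by split_ifs <;> simp [hp j]

lemma marginal_anti (hp : ∀ i, 0 ≤ p i) {S S' : Finset V} (h : S ⊆ S') (i : Cell r) :
    marginal p S' i ≤ marginal p S i := by
  refine Finset.sum_le_sum fun j _ => ?_
  by_cases hj : ∀ v ∈ S', j v = i v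
  · rw [if_pos hj, if_pos fun v hv => hj v (h hv)]
  · rw [if_neg hj]
    split_ifs <;> simp [hp j]

lemma marginal_eq_zero_of_subset (hp : ∀ i, 0 ≤ p i) {S S' : Finset V} (h : S ⊆ S') {i : Cell r}
    (hS : marginal p S i = 0) : marginal p S' i = 0 :=
  le_antisymm (hS ▸ marginal_anti hp h i) (marginal_nonneg hp S' i)

lemma condProb_empty_left {C : Finset V} {i : Cell r} (hC : marginal p C i ≠ 0) :
    condProb p ∅ C i = 1 := by
  rw [condProb, Finset.empty_union, div_self hC]

lemma condIndep_of_condProb_union_eq_mul (hp : ∀ i, 0 ≤ p i) {A B C : Finset V}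
    (h : ∀ i, marginal p C i ≠ 0 →
      condProb p (A ∪ B) C i = condProb p A C i * condProb p B C i) :
    CondIndep p A B C := by
  intro i
  by_cases hC : marginal p C i = 0
  · have hAC : marginal p (A ∪ C) i = 0 :=
      marginal_eq_zero_of_subset hp Finset.subset_union_right hC
    rw [hC, hAC, mul_zero, zero_mul]
  · have hi := h i hC
    simp only [condProb] at hi
    field_simp at hi
    exact hi

end Probability

lemma MRMarkov.condProb_eq_prod_connComps {G : MixedGraph V} {ord : Finset V → Finset V → Prop}
    {p : Cell r → ℝ} (hMR : MRMarkov G ord p) {T : Finset V} (hT : G.IsComponent T)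
    {A : Finset V} (hA : A ⊆ T) {i : Cell r} (hi : marginal p (G.pre ord T) i ≠ 0) :
    condProb p A (G.pre ord T) i = ∏ K ∈ G.connComps A, condProb p K (G.pre ord T) i := by
  rcases A.eq_empty_or_nonempty with rfl | hne
  · rw [MixedGraph.connComps_empty, Finset.prod_empty, condProb_empty_left hi]
  by_cases hconn : G.ConnectedIn A
  · rw [hconn.connComps_eq_singleton, Finset.prod_singleton]
  · exact (hMR T hT A hA hne).2 hconn i

theorem mr_markov_composition_general {G : MixedGraph V} {ord : Finset V → Finset V → Prop}
    {p : Cell r → ℝ} (hp : ∀ i, 0 ≤ p i) (hMR : MRMarkov G ord p)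
    {T : Finset V} (hT : G.IsComponent T) {A B : Finset V} (hA : A ⊆ T) (hB : B ⊆ T)
    (hdisj : Disjoint A B) (hAB : ∀ a ∈ A, ∀ b ∈ B, ¬ G.undir a b) :
    CondIndep p A B (G.pre ord T) := by
  refine condIndep_of_condProb_union_eq_mul hp fun i hi => ?_
  rw [hMR.condProb_eq_prod_connComps hT (Finset.union_subset hA hB) hi,
    hMR.condProb_eq_prod_connComps hT hA hi, hMR.condProb_eq_prod_connComps hT hB hi,
    MixedGraph.connComps_union hAB, Finset.prod_union (MixedGraph.disjoint_connComps hdisj)]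

/-- Remark 1, composition: under the multivariate regression
Markov property, if `a, k, l` are three distinct nodes of a chain component
`T` with no edge between `a` and `k` and no edge between `a` and `l`, then
`{a} ⊥ {k, l} | pre(T)`; i.e. the two pairwise independencies
`{a} ⊥ {k} | pre(T)` and `{a} ⊥ {l} | pre(T)` occur only in combination with
the joint independence (composition holds). -/
theorem mr_markov_composition
    {V : Type*} [Fintype V] [DecidableEq V] {r : V → ℕ} (hr : ∀ v, 2 ≤ r v)
    (G : MixedGraph V) (hG : G.NoSemiDirectedCycle)
    (ord : Finset V → Finset V → Prop) (hord : G.ConsistentOrder ord)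
    (p : Cell r → ℝ) (hp : IsPosPMF p) (hMR : MRMarkov G ord p) :
    ∀ T : Finset V, G.IsComponent T → ∀ a k l : V,
      a ∈ T → k ∈ T → l ∈ T → a ≠ k → a ≠ l → k ≠ l →
      ¬ G.undir a k → ¬ G.dir a k → ¬ G.dir k a →
      ¬ G.undir a l → ¬ G.dir a l → ¬ G.dir l a →
      CondIndep p {a} {k, l} (G.pre ord T) := by
  intro T hT a k l ha hk hl hak hal _ uak _ _ ual _ _
  exact mr_markov_composition_general (fun i => (hp.1 i).le) hMR hT
    (by simp [ha]) (by simp [Finset.insert_subset_iff, hk, hl]) (by simp [hak, hal])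
    (by simp [uak, ual])
end
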